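/- arXiv:1911.09890 — 5 statements merged into one kernel-verified Lean document; each statement's English description precedes it below -/
import Mathlib

section
/- Let S be a finite set, x ∈ ℝ^S, p : 2^S → ℤ supermodular and b : 2^S → ℤ submodular with p(∅)=b(∅)=0 satisfying the cross-inequality b(X) − p(Y) ≥ b(X∖Y) − p(Y∖X) for all X,Y ⊆ S, and suppose p(Y) ≤ x(Y) ≤ b(Y) for all Y ⊆ S. Let 𝒯^p = {Y ⊆ S : x(Y) = p(Y)} and 𝒯^b = {Y ⊆ S : x(Y) = b(Y)} be the collections of p-tight and b-tight sets. If 𝓛 ⊆ 𝒯^p ∪ 𝒯^b is a maximal independent laminar system in 𝒯^p ∪ 𝒯^b, then span({χ_Z : Z ∈ 𝓛}) = span({χ_Z : Z ∈ 𝒯^p ∪ 𝒯^b}), where χ_Z ∈ ℝ^S denotes the characteristic vector of Z and span means the real linear span. -/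
/-- The characteristic vector `χ_Z ∈ ℝ^S` of a finite set `Z ⊆ S`. -/
def chiVec {S : Type*} [DecidableEq S] (Z : Finset S) : S → ℝ :=
  fun s => if s ∈ Z then 1 else 0

/-- A collection of subsets of `S` is laminar if any two members are nested or disjoint. -/
def IsLaminar {S : Type*} (L : Set (Finset S)) : Prop :=
  ∀ X ∈ L, ∀ Y ∈ L, X ⊆ Y ∨ Y ⊆ X ∨ Disjoint X Y

/-- An independent laminar system: laminar, and the characteristic vectors of its members
are linearly independent over `ℝ`. -/
def IsIndepLaminar {S : Type*} [DecidableEq S] (L : Set (Finset S)) : Prop :=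
  IsLaminar L ∧ LinearIndependent ℝ (fun Z : L => chiVec (Z : Finset S))

/-!
If a member `Z` of `L` crosses a tight set `Y`, then the cross-inequality or super- or submodularity
shows that `Y \ Z, Z \ Y` or `Y ∩ Z, Y ∪ Z` are tight again, and their characteristic vectors
together with `χ_Z` generate `χ_Y`. Both new sets are crossed by strictly fewer members of `L` than
`Y`: `Z` no longer crosses them and, `L` being laminar, no other member starts to. By induction it
is enough to treat a tight set that no member of `L` crosses; its characteristic vector lies in the
span of `L`, since otherwise the set could be added to `L`.
-/

/-- Two sets cross if they intersect and neither contains the other, so that a family is laminar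
iff no two of its members cross. -/
def Crosses {S : Type*} (X Y : Finset S) : Prop :=
  ¬ X ⊆ Y ∧ ¬ Y ⊆ X ∧ ¬ Disjoint X Y

/-- The members of the family `L` that cross `Y`. The uncrossing procedure terminates because this
family shrinks. -/
def crossers {S : Type*} (L : Set (Finset S)) (Y : Finset S) : Set (Finset S) :=
  {W ∈ L | Crosses W Y}

/-- An uncrossable family: with any two sets it contains their intersection and union, or their
two differences. -/
def IsUncrossable {S : Type*} [DecidableEq S] (T : Set (Finset S)) : Prop :=
  ∀ Y ∈ T, ∀ Z ∈ T, (Y ∩ Z ∈ T ∧ Y ∪ Z ∈ T) ∨ (Y \ Z ∈ T ∧ Z \ Y ∈ T)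

/-- The `f`-tight sets of the vector `x`: those `Y` with `x(Y) = f(Y)`. -/
def tightSets {S M : Type*} [AddCommMonoid M] (x : S → M) (f : Finset S → M) : Set (Finset S) :=
  {Y | ∑ s ∈ Y, x s = f Y}

section Crossing

variable {S : Type*} {L : Set (Finset S)} {W X Y Z : Finset S}

lemma not_crosses_iff : ¬ Crosses X Y ↔ X ⊆ Y ∨ Y ⊆ X ∨ Disjoint X Y := by
  unfold Crosses
  tauto

lemma Crosses.symm (h : Crosses X Y) : Crosses Y X :=
  ⟨h.2.1, h.1, fun hd => h.2.2 hd.symm⟩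

lemma isLaminar_iff_forall_not_crosses : IsLaminar L ↔ ∀ X ∈ L, ∀ Y ∈ L, ¬ Crosses X Y := by
  simp only [IsLaminar, not_crosses_iff]

lemma IsLaminar.union_singleton (hL : IsLaminar L) (hY : ∀ W ∈ L, ¬ Crosses W Y) :
    IsLaminar (L ∪ {Y}) := by
  rw [isLaminar_iff_forall_not_crosses] at hL ⊢
  rintro A (hA | rfl) B (hB | rfl)
  · exact hL A hA B hB
  · exact hY A hA
  · exact fun h => hY B hB h.symm
  · exact fun h => h.1 subset_rfl

lemma crossers_ssubset_crossers (hZ : Z ∈ L) (hZY : Crosses Z Y) (hZX : ¬ Crosses Z X)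
    (h : ∀ W ∈ L, Crosses W X → Crosses W Y) : crossers L X ⊂ crossers L Y :=
  ⟨fun W hW => ⟨hW.1, h W hW.1 hW.2⟩, fun hsub => hZX (hsub ⟨hZ, hZY⟩).2⟩

variable [DecidableEq S]

lemma Crosses.of_inter (h : Crosses W (Y ∩ Z)) (hWZ : ¬ Crosses W Z) : Crosses W Y := by
  grind [Crosses, Finset.disjoint_left]

lemma Crosses.of_union (h : Crosses W (Y ∪ Z)) (hWZ : ¬ Crosses W Z) (hZY : ¬ Disjoint Z Y) :
    Crosses W Y := by
  grind [Crosses, Finset.disjoint_left]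

lemma Crosses.of_sdiff (h : Crosses W (Y \ Z)) (hWZ : ¬ Crosses W Z) (hZY : ¬ Z ⊆ Y) :
    Crosses W Y := by
  grind [Crosses, Finset.disjoint_left]

lemma Crosses.of_sdiff_swap (h : Crosses W (Z \ Y)) (hWZ : ¬ Crosses W Z) (hYZ : ¬ Y ⊆ Z) :
    Crosses W Y := by
  grind [Crosses, Finset.disjoint_left]

end Crossing

section CharacteristicVector

variable {S : Type*} [DecidableEq S]

lemma chiVec_inter_add_chiVec_union (Y Z : Finset S) :
    chiVec (Y ∩ Z) + chiVec (Y ∪ Z) = chiVec Y + chiVec Z := by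
  ext s
  by_cases hY : s ∈ Y <;> by_cases hZ : s ∈ Z <;> simp [chiVec, hY, hZ]

lemma chiVec_sdiff_sub_chiVec_sdiff (Y Z : Finset S) :
    chiVec (Y \ Z) - chiVec (Z \ Y) = chiVec Y - chiVec Z := by
  ext s
  by_cases hY : s ∈ Y <;> by_cases hZ : s ∈ Z <;> simp [chiVec, hY, hZ]

end CharacteristicVector

section Uncrossing

variable {S : Type*} [DecidableEq S] {L T : Set (Finset S)} {Y Z : Finset S}

lemma IsIndepLaminar.union_singleton (hL : IsIndepLaminar L) (hY : ∀ W ∈ L, ¬ Crosses W Y)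
    (hspan : chiVec Y ∉ Submodule.span ℝ (chiVec '' L)) : IsIndepLaminar (L ∪ {Y}) := by
  have hindep : LinearIndepOn ℝ chiVec (insert Y L) := LinearIndepOn.insert hL.2 hspan
  rw [← Set.union_singleton] at hindep
  exact ⟨hL.1.union_singleton hY, hindep⟩

lemma chiVec_mem_span_of_maximal (hL : IsIndepLaminar L) (hY : ∀ W ∈ L, ¬ Crosses W Y)
    (hmax : Y ∉ L → ¬ IsIndepLaminar (L ∪ {Y})) :
    chiVec Y ∈ Submodule.span ℝ (chiVec '' L) := by
  by_contra hspan
  have hYL : Y ∉ L := fun h => hspan (Submodule.subset_span ⟨Y, h, rfl⟩)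
  exact hmax hYL (hL.union_singleton hY hspan)

lemma IsUncrossable.exists_crossers_ssubset (hT : IsUncrossable T) (hLT : L ⊆ T)
    (hL : IsLaminar L) (hY : Y ∈ T) (hZ : Z ∈ L) (hZY : Crosses Z Y) :
    ∃ U ∈ T, ∃ V ∈ T, crossers L U ⊂ crossers L Y ∧ crossers L V ⊂ crossers L Y ∧
      chiVec Y ∈ Submodule.span ℝ {chiVec U, chiVec V, chiVec Z} := by
  have hLZ : ∀ W ∈ L, ¬ Crosses W Z := fun W hW =>
    isLaminar_iff_forall_not_crosses.1 hL W hW Z hZ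
  obtain ⟨hinter, hunion⟩ | ⟨hsdiff, hsdiff_swap⟩ := hT Y hY Z (hLT hZ)
  · refine ⟨Y ∩ Z, hinter, Y ∪ Z, hunion, ?_, ?_, ?_⟩
    · exact crossers_ssubset_crossers hZ hZY (fun h => h.2.1 Finset.inter_subset_right)
        fun W hW h => h.of_inter (hLZ W hW)
    · exact crossers_ssubset_crossers hZ hZY (fun h => h.1 Finset.subset_union_right)
        fun W hW h => h.of_union (hLZ W hW) hZY.2.2
    · rw [eq_sub_of_add_eq (chiVec_inter_add_chiVec_union Y Z).symm]
      exact sub_mem (add_mem (Submodule.subset_span (by simp)) (Submodule.subset_span (by simp)))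
        (Submodule.subset_span (by simp))
  · refine ⟨Y \ Z, hsdiff, Z \ Y, hsdiff_swap, ?_, ?_, ?_⟩
    · exact crossers_ssubset_crossers hZ hZY (fun h => h.2.2 Finset.disjoint_sdiff)
        fun W hW h => h.of_sdiff (hLZ W hW) hZY.1
    · exact crossers_ssubset_crossers hZ hZY (fun h => h.2.1 Finset.sdiff_subset)
        fun W hW h => h.of_sdiff_swap (hLZ W hW) hZY.2.1
    · rw [eq_add_of_sub_eq (chiVec_sdiff_sub_chiVec_sdiff Y Z).symm]
      exact add_mem (sub_mem (Submodule.subset_span (by simp)) (Submodule.subset_span (by simp)))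
        (Submodule.subset_span (by simp))

lemma IsUncrossable.chiVec_mem_of_finite_crossers (hT : IsUncrossable T) (hLT : L ⊆ T)
    (hL : IsLaminar L) {E : Submodule ℝ (S → ℝ)}
    (huncrossed : ∀ Y ∈ T, (∀ W ∈ L, ¬ Crosses W Y) → chiVec Y ∈ E)
    (hY : Y ∈ T) (hfin : (crossers L Y).Finite) : chiVec Y ∈ E := by
  induction hn : (crossers L Y).ncard using Nat.strong_induction_on generalizing Y with
  | _ n ih =>
    subst hn
    by_cases hcross : ∃ Z ∈ L, Crosses Z Y
    · obtain ⟨Z, hZ, hZY⟩ := hcross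
      obtain ⟨U, hU, V, hV, hUlt, hVlt, hspan⟩ :=
        hT.exists_crossers_ssubset hLT hL hY hZ hZY
      have mem_of_ssubset {X : Finset S} (hX : X ∈ T) (hlt : crossers L X ⊂ crossers L Y) :
          chiVec X ∈ E :=
        ih _ (Set.ncard_lt_ncard hlt hfin) hX (hfin.subset hlt.subset) rfl
      have hZE : chiVec Z ∈ E := huncrossed Z (hLT hZ) fun W hW =>
        isLaminar_iff_forall_not_crosses.1 hL W hW Z hZ
      have hle : Submodule.span ℝ {chiVec U, chiVec V, chiVec Z} ≤ E := by
        rw [Submodule.span_le]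
        rintro _ (rfl | rfl | rfl)
        exacts [mem_of_ssubset hU hUlt, mem_of_ssubset hV hVlt, hZE]
      exact hle hspan
    · push Not at hcross
      exact huncrossed Y hY hcross

theorem IsUncrossable.span_chiVec_eq_of_maximal (hT : IsUncrossable T) (hLT : L ⊆ T)
    (hL : IsIndepLaminar L) (hmax : ∀ Y ∈ T, Y ∉ L → ¬ IsIndepLaminar (L ∪ {Y}))
    (hfin : ∀ Y ∈ T, (crossers L Y).Finite) :
    Submodule.span ℝ (chiVec '' L) = Submodule.span ℝ (chiVec '' T) := by
  refine le_antisymm (Submodule.span_mono (Set.image_mono hLT)) (Submodule.span_le.2 ?_)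
  rintro _ ⟨Y, hY, rfl⟩
  exact hT.chiVec_mem_of_finite_crossers hLT hL.1
    (fun X hX hXL => chiVec_mem_span_of_maximal hL hXL (hmax X hX)) hY (hfin Y hY)

end Uncrossing

section Tight

variable {S M : Type*} [DecidableEq S] [PartialOrder M]

section OrderedCancelMonoid

variable [AddCommMonoid M] [IsOrderedCancelAddMonoid M]
  {x : S → M} {p b : Finset S → M} {Y Z : Finset S}

lemma inter_mem_and_union_mem_tightSets_of_supermodular
    (hsuper : ∀ X Y : Finset S, p X + p Y ≤ p (X ∩ Y) + p (X ∪ Y))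
    (hxp : ∀ Y, p Y ≤ ∑ s ∈ Y, x s) (hY : Y ∈ tightSets x p) (hZ : Z ∈ tightSets x p) :
    Y ∩ Z ∈ tightSets x p ∧ Y ∪ Z ∈ tightSets x p := by
  have hle : ∑ s ∈ Y ∩ Z, x s + ∑ s ∈ Y ∪ Z, x s ≤ p (Y ∩ Z) + p (Y ∪ Z) :=
    calc ∑ s ∈ Y ∩ Z, x s + ∑ s ∈ Y ∪ Z, x s
        = ∑ s ∈ Y ∪ Z, x s + ∑ s ∈ Y ∩ Z, x s := add_comm _ _
      _ = ∑ s ∈ Y, x s + ∑ s ∈ Z, x s := Finset.sum_union_inter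
      _ = p Y + p Z := congrArg₂ (· + ·) hY hZ
      _ ≤ p (Y ∩ Z) + p (Y ∪ Z) := hsuper Y Z
  obtain ⟨hinter, hunion⟩ := (add_eq_add_iff_eq_and_eq (hxp _) (hxp _)).1
    ((add_le_add (hxp _) (hxp _)).antisymm hle)
  exact ⟨hinter.symm, hunion.symm⟩

lemma inter_mem_and_union_mem_tightSets_of_submodular
    (hsub : ∀ X Y : Finset S, b (X ∩ Y) + b (X ∪ Y) ≤ b X + b Y)
    (hxb : ∀ Y, ∑ s ∈ Y, x s ≤ b Y) (hY : Y ∈ tightSets x b) (hZ : Z ∈ tightSets x b) :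
    Y ∩ Z ∈ tightSets x b ∧ Y ∪ Z ∈ tightSets x b := by
  have hle : b (Y ∩ Z) + b (Y ∪ Z) ≤ ∑ s ∈ Y ∩ Z, x s + ∑ s ∈ Y ∪ Z, x s :=
    calc b (Y ∩ Z) + b (Y ∪ Z)
        ≤ b Y + b Z := hsub Y Z
      _ = ∑ s ∈ Y, x s + ∑ s ∈ Z, x s := (congrArg₂ (· + ·) hY hZ).symm
      _ = ∑ s ∈ Y ∪ Z, x s + ∑ s ∈ Y ∩ Z, x s := Finset.sum_union_inter.symm
      _ = ∑ s ∈ Y ∩ Z, x s + ∑ s ∈ Y ∪ Z, x s := add_comm _ _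
  exact (add_eq_add_iff_eq_and_eq (hxb _) (hxb _)).1 ((add_le_add (hxb _) (hxb _)).antisymm hle)

end OrderedCancelMonoid

section OrderedGroup

variable [AddCommGroup M] [IsOrderedAddMonoid M]
  {x : S → M} {p b : Finset S → M} {Y Z : Finset S}

lemma sdiff_mem_and_sdiff_mem_tightSets_of_cross
    (hcross : ∀ X Y : Finset S, b (X \ Y) - p (Y \ X) ≤ b X - p Y)
    (hxp : ∀ Y, p Y ≤ ∑ s ∈ Y, x s) (hxb : ∀ Y, ∑ s ∈ Y, x s ≤ b Y)
    (hY : Y ∈ tightSets x b) (hZ : Z ∈ tightSets x p) :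
    Y \ Z ∈ tightSets x b ∧ Z \ Y ∈ tightSets x p := by
  have hle : b (Y \ Z) - p (Z \ Y) ≤ ∑ s ∈ Y \ Z, x s - ∑ s ∈ Z \ Y, x s :=
    calc b (Y \ Z) - p (Z \ Y)
        ≤ b Y - p Z := hcross Y Z
      _ = ∑ s ∈ Y, x s - ∑ s ∈ Z, x s := (congrArg₂ (· - ·) hY hZ).symm
      _ = ∑ s ∈ Y \ Z, x s - ∑ s ∈ Z \ Y, x s := Finset.sum_sdiff_sub_sum_sdiff.symm
  have hle_add : b (Y \ Z) + ∑ s ∈ Z \ Y, x s ≤ ∑ s ∈ Y \ Z, x s + p (Z \ Y) :=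
    sub_le_sub_iff.1 hle
  obtain ⟨hYZ, hZY⟩ := (add_eq_add_iff_eq_and_eq (hxb _) (hxp _)).1
    ((add_le_add (hxb _) (hxp _)).antisymm hle_add)
  exact ⟨hYZ, hZY.symm⟩

theorem isUncrossable_tightSets_union_tightSets
    (hsuper : ∀ X Y : Finset S, p X + p Y ≤ p (X ∩ Y) + p (X ∪ Y))
    (hsub : ∀ X Y : Finset S, b (X ∩ Y) + b (X ∪ Y) ≤ b X + b Y)
    (hcross : ∀ X Y : Finset S, b (X \ Y) - p (Y \ X) ≤ b X - p Y)
    (hxp : ∀ Y, p Y ≤ ∑ s ∈ Y, x s) (hxb : ∀ Y, ∑ s ∈ Y, x s ≤ b Y) :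
    IsUncrossable (tightSets x p ∪ tightSets x b) := by
  rintro Y (hY | hY) Z (hZ | hZ)
  · exact .inl <|
      (inter_mem_and_union_mem_tightSets_of_supermodular hsuper hxp hY hZ).imp .inl .inl
  · exact .inr <|
      (sdiff_mem_and_sdiff_mem_tightSets_of_cross hcross hxp hxb hZ hY).symm.imp .inl .inr
  · exact .inr <|
      (sdiff_mem_and_sdiff_mem_tightSets_of_cross hcross hxp hxb hY hZ).imp .inr .inl
  · exact .inl <|
      (inter_mem_and_union_mem_tightSets_of_submodular hsub hxb hY hZ).imp .inr .inr

end OrderedGroup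

end Tight

theorem uncrossing_claim_general {S M : Type*} [DecidableEq S]
    [AddCommGroup M] [PartialOrder M] [IsOrderedAddMonoid M]
    {p b : Finset S → M}
    (hsuper : ∀ X Y : Finset S, p X + p Y ≤ p (X ∩ Y) + p (X ∪ Y))
    (hsub : ∀ X Y : Finset S, b (X ∩ Y) + b (X ∪ Y) ≤ b X + b Y)
    (hcross : ∀ X Y : Finset S, b (X \ Y) - p (Y \ X) ≤ b X - p Y)
    {x : S → M} (hxp : ∀ Y, p Y ≤ ∑ s ∈ Y, x s) (hxb : ∀ Y, ∑ s ∈ Y, x s ≤ b Y)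
    {L : Set (Finset S)} (hLsub : L ⊆ tightSets x p ∪ tightSets x b) (hL : IsIndepLaminar L)
    (hLmax : ∀ Y ∈ tightSets x p ∪ tightSets x b, Y ∉ L → ¬ IsIndepLaminar (L ∪ {Y}))
    (hfin : ∀ Y ∈ tightSets x p ∪ tightSets x b, (crossers L Y).Finite) :
    Submodule.span ℝ (chiVec '' L) =
      Submodule.span ℝ (chiVec '' (tightSets x p ∪ tightSets x b)) :=
  (isUncrossable_tightSets_union_tightSets hsuper hsub hcross hxp hxb).span_chiVec_eq_of_maximal
    hLsub hL hLmax hfin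

/-- **Claim 7 (uncrossing claim).** Let `(p,b)` satisfy `p(∅)=b(∅)=0`, `p` supermodular,
`b` submodular and the cross-inequality, and let `x` satisfy `p(Y) ≤ x(Y) ≤ b(Y)` for all
`Y ⊆ S`. If `𝓛` is a maximal independent laminar system inside the family of `p`-tight and
`b`-tight sets, then the span of the characteristic vectors of `𝓛` equals the span of the
characteristic vectors of all tight sets. -/
theorem uncrossing_claim
    {S : Type*} [Fintype S] [DecidableEq S]
    (p b : Finset S → ℤ)
    (hp0 : p ∅ = 0) (hb0 : b ∅ = 0)
    (hsuper : ∀ X Y : Finset S, p X + p Y ≤ p (X ∩ Y) + p (X ∪ Y))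
    (hsub : ∀ X Y : Finset S, b (X ∩ Y) + b (X ∪ Y) ≤ b X + b Y)
    (hcross : ∀ X Y : Finset S, b (X \ Y) - p (Y \ X) ≤ b X - p Y)
    (x : S → ℝ)
    (hxp : ∀ Y : Finset S, (p Y : ℝ) ≤ ∑ s ∈ Y, x s)
    (hxb : ∀ Y : Finset S, ∑ s ∈ Y, x s ≤ (b Y : ℝ))
    (Tp Tb : Set (Finset S))
    (hTp : Tp = {Y : Finset S | ∑ s ∈ Y, x s = (p Y : ℝ)})
    (hTb : Tb = {Y : Finset S | ∑ s ∈ Y, x s = (b Y : ℝ)})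
    (L : Set (Finset S))
    (hLsub : L ⊆ Tp ∪ Tb)
    (hL : IsIndepLaminar L)
    (hLmax : ∀ Y ∈ Tp ∪ Tb, Y ∉ L → ¬ IsIndepLaminar (L ∪ {Y})) :
    Submodule.span ℝ (chiVec '' L) = Submodule.span ℝ (chiVec '' (Tp ∪ Tb)) := by
  subst hTp hTb
  exact uncrossing_claim_general (mod_cast hsuper) (mod_cast hsub) (mod_cast hcross) hxp hxb
    hLsub hL hLmax fun _ _ => Set.toFinite _
end

section
/- Let S be a finite set, p : 2^S → ℝ a supermodular set function, and x ∈ ℝ^S with p(Y) ≤ x(Y) for all Y ⊆ S. If R, T ⊆ S satisfy x(R) = p(R) and x(T) = p(T), then also x(R ∪ T) = p(R ∪ T) and x(R ∩ T) = p(R ∩ T); that is, the collection of p-tight sets is closed under union and intersection. -/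
/-- Supermodularity of a function on a lattice. For `α = Finset S` this is supermodularity of a
set function, with `⊓` and `⊔` standing for intersection and union. -/
def IsSupermodular {α β : Type*} [Lattice α] [Add β] [LE β] (p : α → β) : Prop :=
  ∀ a b, p a + p b ≤ p (a ⊓ b) + p (a ⊔ b)

/-- Submodularity of a function on a lattice, the reverse inequality to `IsSupermodular`. It
abstracts the additive set function `Y ↦ x(Y)` that dominates `p`. -/
def IsSubmodular {α β : Type*} [Lattice α] [Add β] [LE β] (f : α → β) : Prop :=
  ∀ a b, f (a ⊓ b) + f (a ⊔ b) ≤ f a + f b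

theorem isSubmodular_finset_sum {S β : Type*} [DecidableEq S] [AddCommMonoid β] [Preorder β]
    (x : S → β) : IsSubmodular fun Y : Finset S ↦ ∑ s ∈ Y, x s :=
  fun _ _ ↦ ((add_comm _ _).trans Finset.sum_union_inter).le

theorem supermodular_tight_uncrossing_general
    {α β : Type*} [Lattice α] [AddCommMonoid β] [PartialOrder β] [IsOrderedCancelAddMonoid β]
    {p f : α → β}
    (hp : IsSupermodular p) (hf : IsSubmodular f) (hpf : p ≤ f) {a b : α}
    (ha : f a = p a) (hb : f b = p b) :
    f (a ⊔ b) = p (a ⊔ b) ∧ f (a ⊓ b) = p (a ⊓ b) := by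
  have sum_le : f (a ⊓ b) + f (a ⊔ b) ≤ p (a ⊓ b) + p (a ⊔ b) :=
    calc f (a ⊓ b) + f (a ⊔ b) ≤ f a + f b := hf a b
      _ = p a + p b := by rw [ha, hb]
      _ ≤ p (a ⊓ b) + p (a ⊔ b) := hp a b
  have sum_eq : p (a ⊓ b) + p (a ⊔ b) = f (a ⊓ b) + f (a ⊔ b) :=
    (add_le_add (hpf _) (hpf _)).antisymm sum_le
  obtain ⟨inf_eq, sup_eq⟩ := (add_eq_add_iff_eq_and_eq (hpf _) (hpf _)).mp sum_eq
  exact ⟨sup_eq.symm, inf_eq.symm⟩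

/-- The family of `p`-tight sets of a supermodular function is closed under union and
intersection (uncrossing step, Case 1 in the proof of Claim 7): if `p(Y) ≤ x(Y)` for all
`Y ⊆ S` and `R`, `T` are `p`-tight, then so are `R ∪ T` and `R ∩ T`. -/
theorem supermodular_tight_uncrossing
    {S : Type*} [Fintype S] [DecidableEq S]
    (p : Finset S → ℝ)
    (hsuper : ∀ X Y : Finset S, p X + p Y ≤ p (X ∩ Y) + p (X ∪ Y))
    (x : S → ℝ)
    (hxp : ∀ Y : Finset S, p Y ≤ ∑ s ∈ Y, x s)
    (R T : Finset S)
    (hR : ∑ s ∈ R, x s = p R) (hT : ∑ s ∈ T, x s = p T) :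
    ∑ s ∈ R ∪ T, x s = p (R ∪ T) ∧ ∑ s ∈ R ∩ T, x s = p (R ∩ T) :=
  supermodular_tight_uncrossing_general hsuper (isSubmodular_finset_sum x) hxp hR hT
end

section
/- Let S be a finite set, let p, b : 2^S → ℝ be set functions satisfying the cross-inequality b(X) − p(Y) ≥ b(X∖Y) − p(Y∖X) for all X,Y ⊆ S, and let x ∈ ℝ^S with p(Y) ≤ x(Y) ≤ b(Y) for all Y ⊆ S. If R, T ⊆ S satisfy x(R) = p(R) (R is p-tight) and x(T) = b(T) (T is b-tight), then x(T∖R) = b(T∖R) and x(R∖T) = p(R∖T); that is, T∖R is b-tight and R∖T is p-tight. -/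
theorem eq_and_eq_of_sub_le_sub {G : Type*} [AddCommGroup G] [PartialOrder G]
    [IsOrderedAddMonoid G] {a b c d : G} (hab : a ≤ b) (hdc : d ≤ c) (h : b - d ≤ a - c) :
    a = b ∧ c = d := by
  have hsub : a - c = b - d := (sub_le_sub hab hdc).antisymm h
  have hadd : a + d = b + c := sub_eq_sub_iff_add_eq_add.mp hsub
  obtain ⟨hab_eq, hdc_eq⟩ := (add_eq_add_iff_eq_and_eq hab hdc).mp hadd
  exact ⟨hab_eq, hdc_eq.symm⟩

theorem cross_inequality_tight_uncrossing_general
    {S G : Type*} [DecidableEq S] [AddCommGroup G] [PartialOrder G] [IsOrderedAddMonoid G]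
    {p b : Finset S → G} {x : S → G} {R T : Finset S}
    (hcross : b (T \ R) - p (R \ T) ≤ b T - p R)
    (hxp : p (R \ T) ≤ ∑ s ∈ R \ T, x s)
    (hxb : ∑ s ∈ T \ R, x s ≤ b (T \ R))
    (hR : ∑ s ∈ R, x s = p R) (hT : ∑ s ∈ T, x s = b T) :
    ∑ s ∈ T \ R, x s = b (T \ R) ∧ ∑ s ∈ R \ T, x s = p (R \ T) := by
  refine eq_and_eq_of_sub_le_sub hxb hxp ?_
  calc
    b (T \ R) - p (R \ T) ≤ b T - p R := hcross
    _ = ∑ s ∈ T, x s - ∑ s ∈ R, x s := by rw [hT, hR]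
    _ = ∑ s ∈ T \ R, x s - ∑ s ∈ R \ T, x s := Finset.sum_sdiff_sub_sum_sdiff.symm

/-- Uncrossing a `p`-tight set with a `b`-tight set (Case 2 in the proof of Claim 7):
if `p` and `b` satisfy the cross-inequality, `p(Y) ≤ x(Y) ≤ b(Y)` for all `Y ⊆ S`,
`R` is `p`-tight and `T` is `b`-tight, then `T \ R` is `b`-tight and `R \ T` is `p`-tight. -/
theorem cross_inequality_tight_uncrossing
    {S : Type*} [Fintype S] [DecidableEq S]
    (p b : Finset S → ℝ)
    (hcross : ∀ X Y : Finset S, b (X \ Y) - p (Y \ X) ≤ b X - p Y)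
    (x : S → ℝ)
    (hxp : ∀ Y : Finset S, p Y ≤ ∑ s ∈ Y, x s)
    (hxb : ∀ Y : Finset S, ∑ s ∈ Y, x s ≤ b Y)
    (R T : Finset S)
    (hR : ∑ s ∈ R, x s = p R) (hT : ∑ s ∈ T, x s = b T) :
    ∑ s ∈ T \ R, x s = b (T \ R) ∧ ∑ s ∈ R \ T, x s = p (R \ T) :=
  cross_inequality_tight_uncrossing_general (hcross T R) (hxp (R \ T)) (hxb (T \ R)) hR hT
end

section
/- Let G = (V,E) be a finite complete undirected graph whose edge set contains a self-loop at every vertex, let r : V → ℤ≥1, and set r̂ = r(V) − |V| + 1 where r(V) = Σ_{v∈V} r(v). Define b : 2^E → ℤ by b(F) = |V(F)| − comp(F) + r̂ for F ≠ ∅ and b(∅) = 0, where V(F) is the set of vertices covered by F and comp(F) is the number of connected components of the graph (V(F), F). Then b is a polymatroid function: b(∅) = 0, b is monotone non-decreasing, and b is submodular (b(X) + b(Y) ≥ b(X∩Y) + b(X∪Y) for all X,Y ⊆ E). -/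
/- The complete undirected graph with a self-loop at every vertex of the finite vertex
type `V` is modelled by taking the edge set `E` to be all of `Sym2 V` (diagonal elements
of `Sym2 V` are the self-loops). -/

/-- `V(F)`: the set of vertices covered by the edge set `F`. -/
def coveredVerts {V : Type*} [Fintype V] [DecidableEq V] (F : Finset (Sym2 V)) : Set V :=
  {v | ∃ e ∈ F, v ∈ e}

/-- `comp(F)`: the number of connected components of the graph `(V(F), F)`
(self-loops create no adjacencies, so a vertex covered only by a loop forms its own
component). -/
noncomputable def numComp {V : Type*} [Fintype V] [DecidableEq V]
    (F : Finset (Sym2 V)) : ℕ :=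
  ((SimpleGraph.fromEdgeSet (↑F : Set (Sym2 V))).connectedComponentMk '' coveredVerts F).ncard

/-- The border function `b(F) = |V(F)| - comp(F) + r̂` for `F ≠ ∅`, and `b(∅) = 0`. -/
noncomputable def borderB {V : Type*} [Fintype V] [DecidableEq V]
    (rhat : ℤ) (F : Finset (Sym2 V)) : ℤ :=
  if F = ∅ then 0 else ((coveredVerts F).ncard : ℤ) - (numComp F : ℤ) + rhat

/-!
On nonempty `F`, `b(F)` is `r̂` plus the rank `|V| - c(F)` of `F` in the graphic matroid, where
`c(F)` counts the components of the spanning graph `(V, F)`: the vertices outside `V(F)` are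
isolated, so they contribute equally to `|V|` and to `c(F)`.

The number of components of a graph is the dimension of the kernel of its Laplacian, that is, of the
space of functions constant along edges. The kernel of `G ⊔ H` is the intersection of the kernels of
`G` and `H`, and the kernel of `G ⊓ H` contains their sum, so submodularity of the rank is the
dimension formula for subspaces. Since `r̂ ≥ 0`, setting `b(∅) = 0` only lowers the value at `∅`,
and in a nontrivial instance of either inequality `∅` occurs only on the smaller side.
-/

open SimpleGraph

section LaplacianKernel

variable {V : Type*} [Fintype V] [DecidableEq V]
  (G H : SimpleGraph V) [DecidableRel G.Adj] [DecidableRel H.Adj]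

lemma mem_ker_toLin'_lapMatrix {f : V → ℝ} :
    f ∈ (G.lapMatrix ℝ).toLin'.ker ↔ ∀ u v, G.Adj u v → f u = f v := by
  rw [LinearMap.mem_ker, Matrix.toLin'_apply, lapMatrix_mulVec_eq_zero_iff_forall_adj]

lemma ker_toLin'_lapMatrix_sup [DecidableRel (G ⊔ H).Adj] :
    ((G ⊔ H).lapMatrix ℝ).toLin'.ker =
      (G.lapMatrix ℝ).toLin'.ker ⊓ (H.lapMatrix ℝ).toLin'.ker := by
  ext f
  simp only [Submodule.mem_inf, mem_ker_toLin'_lapMatrix, sup_adj, or_imp, forall_and]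

variable {G H} in
lemma ker_toLin'_lapMatrix_le_of_le (h : G ≤ H) :
    (H.lapMatrix ℝ).toLin'.ker ≤ (G.lapMatrix ℝ).toLin'.ker := by
  intro f hf
  rw [mem_ker_toLin'_lapMatrix] at hf ⊢
  exact fun u v huv => hf u v (h huv)

end LaplacianKernel

section GraphicRank

variable {V : Type*}

/-- The rank of the edge set of `G` in the graphic matroid of the complete graph on `V`: the number
of vertices minus the number of connected components. It is integer-valued to avoid truncated
subtraction. -/
noncomputable def graphicRank (G : SimpleGraph V) : ℤ :=
  Nat.card V - Nat.card G.ConnectedComponent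

variable [Finite V]

lemma card_connectedComponent_add_le (G H : SimpleGraph V) :
    Nat.card G.ConnectedComponent + Nat.card H.ConnectedComponent ≤
      Nat.card (G ⊓ H).ConnectedComponent + Nat.card (G ⊔ H).ConnectedComponent := by
  classical
  have := Fintype.ofFinite V
  simp only [Nat.card_eq_fintype_card, card_connectedComponent_eq_finrank_ker_toLin'_lapMatrix]
  rw [ker_toLin'_lapMatrix_sup, ← Submodule.finrank_sup_add_finrank_inf_eq]
  gcongr
  exact Submodule.finrank_mono (sup_le (ker_toLin'_lapMatrix_le_of_le inf_le_left)
    (ker_toLin'_lapMatrix_le_of_le inf_le_right))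

lemma graphicRank_nonneg (G : SimpleGraph V) : 0 ≤ graphicRank G := by
  have h : Nat.card G.ConnectedComponent ≤ Nat.card V :=
    Nat.card_le_card_of_surjective G.connectedComponentMk Quot.mk_surjective
  unfold graphicRank
  lia

lemma graphicRank_mono {G H : SimpleGraph V} (h : G ≤ H) : graphicRank G ≤ graphicRank H := by
  have := ConnectedComponent.card_le_card_of_le h
  unfold graphicRank
  lia

lemma graphicRank_inf_add_graphicRank_sup_le (G H : SimpleGraph V) :
    graphicRank (G ⊓ H) + graphicRank (G ⊔ H) ≤ graphicRank G + graphicRank H := by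
  have := card_connectedComponent_add_le G H
  unfold graphicRank
  lia

lemma ncard_image_connectedComponentMk_add_ncard_compl {G : SimpleGraph V} {S : Set V}
    (hS : G.support ⊆ S) :
    (G.connectedComponentMk '' S).ncard + Sᶜ.ncard = Nat.card G.ConnectedComponent := by
  have eq_of_mk_eq {u v : V} (hu : u ∉ S)
      (huv : G.connectedComponentMk u = G.connectedComponentMk v) : u = v := by
    by_contra hne
    exact hu (hS (mem_support_of_reachable hne (ConnectedComponent.exact huv)))
  have ncard_image_compl : (G.connectedComponentMk '' Sᶜ).ncard = Sᶜ.ncard :=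
    Set.InjOn.ncard_image fun u hu v _ huv => eq_of_mk_eq hu huv
  have images_disjoint :
      Disjoint (G.connectedComponentMk '' S) (G.connectedComponentMk '' Sᶜ) := by
    rw [Set.disjoint_left]
    rintro _ ⟨u, hu, rfl⟩ ⟨v, hv, hvu⟩
    exact hv (eq_of_mk_eq hv hvu ▸ hu)
  have images_cover : G.connectedComponentMk '' S ∪ G.connectedComponentMk '' Sᶜ = Set.univ := by
    rw [← Set.image_union, Set.union_compl_self, Set.image_univ]
    exact Set.range_eq_univ.2 Quot.mk_surjective
  rw [← ncard_image_compl, ← Set.ncard_union_eq images_disjoint, images_cover, Set.ncard_univ]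

lemma ncard_sub_ncard_image_connectedComponentMk {G : SimpleGraph V} {S : Set V}
    (hS : G.support ⊆ S) :
    (S.ncard : ℤ) - (G.connectedComponentMk '' S).ncard = graphicRank G := by
  have card_components := ncard_image_connectedComponentMk_add_ncard_compl hS
  have card_verts := Set.ncard_add_ncard_compl S
  unfold graphicRank
  lia

end GraphicRank

section BorderFunction

variable {V : Type*} [Fintype V] [DecidableEq V]

lemma support_fromEdgeSet_subset_coveredVerts (F : Finset (Sym2 V)) :
    (fromEdgeSet (F : Set (Sym2 V))).support ⊆ coveredVerts F := by
  rintro u ⟨v, huv⟩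
  exact ⟨s(u, v), ((fromEdgeSet_adj _).1 huv).1, Sym2.mem_mk_left u v⟩

lemma borderB_empty (rhat : ℤ) : borderB rhat (∅ : Finset (Sym2 V)) = 0 :=
  if_pos rfl

lemma borderB_of_nonempty (rhat : ℤ) {F : Finset (Sym2 V)} (hF : F.Nonempty) :
    borderB rhat F = graphicRank (fromEdgeSet (F : Set (Sym2 V))) + rhat := by
  rw [borderB, if_neg hF.ne_empty, numComp,
    ncard_sub_ncard_image_connectedComponentMk (support_fromEdgeSet_subset_coveredVerts F)]

lemma borderB_le_graphicRank_add {rhat : ℤ} (hrhat : 0 ≤ rhat) (F : Finset (Sym2 V)) :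
    borderB rhat F ≤ graphicRank (fromEdgeSet (F : Set (Sym2 V))) + rhat := by
  rcases F.eq_empty_or_nonempty with rfl | hF
  · rw [borderB_empty]
    exact add_nonneg (graphicRank_nonneg _) hrhat
  · exact (borderB_of_nonempty rhat hF).le

lemma borderB_mono {rhat : ℤ} (hrhat : 0 ≤ rhat) {X Y : Finset (Sym2 V)} (hXY : X ⊆ Y) :
    borderB rhat X ≤ borderB rhat Y := by
  rcases Y.eq_empty_or_nonempty with rfl | hY
  · rw [Finset.subset_empty.1 hXY]
  calc borderB rhat X ≤ graphicRank (fromEdgeSet (X : Set (Sym2 V))) + rhat :=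
        borderB_le_graphicRank_add hrhat X
    _ ≤ graphicRank (fromEdgeSet (Y : Set (Sym2 V))) + rhat := by
        gcongr
        exact graphicRank_mono (fromEdgeSet_mono (Finset.coe_subset.2 hXY))
    _ = borderB rhat Y := (borderB_of_nonempty rhat hY).symm

lemma borderB_inter_add_borderB_union_le {rhat : ℤ} (hrhat : 0 ≤ rhat) (X Y : Finset (Sym2 V)) :
    borderB rhat (X ∩ Y) + borderB rhat (X ∪ Y) ≤ borderB rhat X + borderB rhat Y := by
  rcases X.eq_empty_or_nonempty with rfl | hX
  · rw [Finset.empty_inter, Finset.empty_union]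
  rcases Y.eq_empty_or_nonempty with rfl | hY
  · rw [Finset.inter_empty, Finset.union_empty, add_comm]
  have inter_le := borderB_le_graphicRank_add hrhat (X ∩ Y)
  have union_le := borderB_le_graphicRank_add hrhat (X ∪ Y)
  rw [Finset.coe_inter, fromEdgeSet_inter] at inter_le
  rw [Finset.coe_union, fromEdgeSet_union] at union_le
  have rank_submodular := graphicRank_inf_add_graphicRank_sup_le
    (fromEdgeSet (X : Set (Sym2 V))) (fromEdgeSet (Y : Set (Sym2 V)))
  rw [borderB_of_nonempty rhat hX, borderB_of_nonempty rhat hY]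
  lia

end BorderFunction

/-- **Lemma 8.** With `r : V → ℤ`, `r(v) ≥ 1`, and `r̂ = r(V) - |V| + 1`, the function
`b(F) = |V(F)| - comp(F) + r̂` (for `F ≠ ∅`, with `b(∅) = 0`) is a polymatroid function:
it vanishes on `∅`, is monotone non-decreasing and submodular. -/
theorem borderB_is_polymatroid_function
    {V : Type*} [Fintype V] [DecidableEq V]
    (r : V → ℤ) (hr : ∀ v, 1 ≤ r v)
    (rhat : ℤ) (hrhat : rhat = (∑ v : V, r v) - (Fintype.card V : ℤ) + 1) :
    borderB rhat (∅ : Finset (Sym2 V)) = 0 ∧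
    (∀ X Y : Finset (Sym2 V), X ⊆ Y → borderB rhat X ≤ borderB rhat Y) ∧
    (∀ X Y : Finset (Sym2 V),
      borderB rhat (X ∩ Y) + borderB rhat (X ∪ Y) ≤ borderB rhat X + borderB rhat Y) := by
  have card_le_sum : (Fintype.card V : ℤ) ≤ ∑ v, r v := by
    simpa using Finset.card_nsmul_le_sum Finset.univ r 1 fun v _ => hr v
  have rhat_nonneg : 0 ≤ rhat := by lia
  exact ⟨borderB_empty rhat, fun _ _ => borderB_mono rhat_nonneg,
    borderB_inter_add_borderB_union_le rhat_nonneg⟩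
end

section
/- Let G = (V,E) be a finite complete undirected graph with a self-loop at every vertex, let c : E → ℝ≥0 satisfy the triangle inequality (including c(vv) ≤ 2·min_{u∈V} c(uv) for loops), and let r : V → ℤ≥1. Then for every z ∈ ℤ^E_{≥0} with d_z(v) = 2·r(v) for all v ∈ V, there exists z' ∈ ℤ^E_{≥0} with d_{z'}(v) = 2·(r(v) − 1) for all v ∈ V and c(z') ≤ c(z). Consequently, the optimal transportation costs satisfy c(TP*_{c,r-1}) ≤ c(TP*_{c,r}). -/
/- The complete undirected graph with a self-loop at every vertex of the finite vertex
type `V` is modelled by taking the edge set `E` to be all of `Sym2 V`. -/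

/-- `d_z(v)`: the sum of the `z`-values on the edges incident to `v`, with the self-loop
at `v` counted twice. -/
def degSum {V : Type*} [Fintype V] [DecidableEq V] (z : Sym2 V → ℤ) (v : V) : ℤ :=
  (∑ u : V, z s(v, u)) + z s(v, v)

/-- `c(z) = ∑_e c(e) z(e)`: the cost of the multigraph represented by `z`. -/
def tourCost {V : Type*} [Fintype V] [DecidableEq V] (c : Sym2 V → ℝ) (z : Sym2 V → ℤ) :
    ℝ :=
  ∑ e : Sym2 V, c e * (z e : ℝ)

/-!
Lower the degrees by two at one vertex `v` at a time. Take an edge `vu`; if it is a loop, delete it.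
Otherwise there is a second edge `vw`, and the two edges are split off, that is, replaced by `uw`,
which does not increase the cost by the triangle inequality. Neither operation changes the degree
of any other vertex.
-/

section

variable {V : Type*} [Fintype V] [DecidableEq V]

lemma degSum_add (y z : Sym2 V → ℤ) : degSum (y + z) = degSum y + degSum z := by
  ext v
  simp only [degSum, Pi.add_apply, Finset.sum_add_distrib]
  ring

lemma degSum_single (a b : V) :
    degSum (Pi.single s(a, b) 1) = Pi.single a 1 + Pi.single b 1 := by
  ext v
  obtain rfl | hva := eq_or_ne v a
  · simp only [degSum, Pi.add_apply, Pi.single_apply, Sym2.congr_right, Finset.sum_ite_eq',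
      Finset.mem_univ, if_true]
  · obtain rfl | hvb := eq_or_ne v b
    · simp [degSum, Pi.single_apply, hva]
    · simp [degSum, hva, hvb]

lemma tourCost_add (c : Sym2 V → ℝ) (y z : Sym2 V → ℤ) :
    tourCost c (y + z) = tourCost c y + tourCost c z := by
  simp only [tourCost, Pi.add_apply, Int.cast_add, mul_add, Finset.sum_add_distrib]

lemma tourCost_single (c : Sym2 V → ℝ) (e : Sym2 V) : tourCost c (Pi.single e 1) = c e := by
  simp [tourCost, Pi.single_apply]

lemma exists_pos_of_degSum_pos {z : Sym2 V → ℤ} {v : V} (hv : 0 < degSum z v) :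
    ∃ u, 0 < z s(v, u) := by
  contrapose! hv
  exact add_nonpos (Finset.sum_nonpos fun u _ => hv u) (hv v)

lemma exists_eq_add_single_of_degSum_pos {z : Sym2 V → ℤ} (hz : 0 ≤ z) {v : V}
    (hv : 0 < degSum z v) : ∃ (u : V) (y : Sym2 V → ℤ), 0 ≤ y ∧ z = y + Pi.single s(v, u) 1 := by
  obtain ⟨u, hu⟩ := exists_pos_of_degSum_pos hv
  have hle : Pi.single s(v, u) 1 ≤ z := update_le_iff.2 ⟨hu, fun e _ => hz e⟩
  exact ⟨u, z - Pi.single s(v, u) 1, sub_nonneg.2 hle, (sub_add_cancel _ _).symm⟩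

lemma degSum_split_off (y : Sym2 V → ℤ) (u v w : V) :
    degSum (y + Pi.single s(u, w) 1) + Pi.single v 2 =
      degSum (y + Pi.single s(v, w) 1 + Pi.single s(v, u) 1) := by
  have htwo : (Pi.single v 2 : V → ℤ) = Pi.single v 1 + Pi.single v 1 := by
    rw [← Pi.single_add, one_add_one_eq_two]
  simp only [degSum_add, degSum_single, htwo]
  abel

lemma tourCost_split_off_le {c : Sym2 V → ℝ}
    (htri : ∀ u v w : V, c s(u, w) ≤ c s(u, v) + c s(v, w)) (y : Sym2 V → ℤ) (u v w : V) :
    tourCost c (y + Pi.single s(u, w) 1) ≤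
      tourCost c (y + Pi.single s(v, w) 1 + Pi.single s(v, u) 1) := by
  simp only [tourCost_add, tourCost_single, Sym2.eq_swap (a := v) (b := u)]
  linarith [htri u v w]

lemma exists_degSum_add_single_two_eq {c : Sym2 V → ℝ}
    (htri : ∀ u v w : V, c s(u, w) ≤ c s(u, v) + c s(v, w)) {z : Sym2 V → ℤ}
    (hz : 0 ≤ z) {v : V} (hv : 2 ≤ degSum z v) :
    ∃ z' : Sym2 V → ℤ, 0 ≤ z' ∧ degSum z' + Pi.single v 2 = degSum z ∧
      tourCost c z' ≤ tourCost c z := by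
  obtain ⟨u, y, hy, rfl⟩ := exists_eq_add_single_of_degSum_pos hz (by lia : 0 < degSum z v)
  obtain rfl | huv := eq_or_ne u v
  · have hloop : 0 ≤ c s(u, u) := by linarith [htri u u u]
    refine ⟨y, hy, ?_, ?_⟩
    · rw [degSum_add, degSum_single, ← Pi.single_add, one_add_one_eq_two]
    · rw [tourCost_add, tourCost_single]
      exact le_add_of_nonneg_right hloop
  · have hyv : 0 < degSum y v := by
      simp only [degSum_add, degSum_single, Pi.add_apply, Pi.single_eq_same,
        Pi.single_eq_of_ne huv.symm] at hv
      lia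
    obtain ⟨w, x, hx, rfl⟩ := exists_eq_add_single_of_degSum_pos hy hyv
    exact ⟨x + Pi.single s(u, w) 1, add_nonneg hx (Pi.single_nonneg.2 zero_le_one),
      degSum_split_off x u v w, tourCost_split_off_le htri x u v w⟩

lemma exists_degSum_add_two_mul_count_eq {c : Sym2 V → ℝ}
    (htri : ∀ u v w : V, c s(u, w) ≤ c s(u, v) + c s(v, w)) (m : Multiset V)
    {z : Sym2 V → ℤ} (hz : 0 ≤ z) (hm : ∀ v, 2 * (m.count v : ℤ) ≤ degSum z v) :
    ∃ z' : Sym2 V → ℤ, 0 ≤ z' ∧ (∀ v, degSum z' v + 2 * m.count v = degSum z v) ∧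
      tourCost c z' ≤ tourCost c z := by
  induction m using Multiset.induction_on with
  | empty => exact ⟨z, hz, by simp, le_rfl⟩
  | cons a m ih =>
    have hcount (v : V) :
        2 * ((a ::ₘ m).count v : ℤ) = 2 * m.count v + (Pi.single a 2 : V → ℤ) v := by
      rw [Multiset.count_cons, Pi.single_apply]
      split_ifs <;> push_cast <;> ring
    simp only [hcount] at hm ⊢
    have hsingle : (0 : V → ℤ) ≤ Pi.single a 2 := Pi.single_nonneg.2 zero_le_two
    obtain ⟨y, hy, hydeg, hycost⟩ := ih fun v => (le_add_of_nonneg_right (hsingle v)).trans (hm v)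
    have hya : 2 ≤ degSum y a := by
      have hma := hm a
      rw [Pi.single_eq_same] at hma
      linarith [hydeg a]
    obtain ⟨z', hz', hdeg, hcost⟩ := exists_degSum_add_single_two_eq htri hy hya
    refine ⟨z', hz', fun v => ?_, hcost.trans hycost⟩
    rw [← hydeg v, ← hdeg, Pi.add_apply]
    ring

end

/-- Under the triangle inequality, any nonnegative integral edge vector with degrees
`2 r(v)` can be turned into one with degrees `2 (r(v) - 1)` of no larger cost.
Consequently, the optimal transportation costs satisfy
`c(TP*_{c,r-1}) ≤ c(TP*_{c,r})`. -/
theorem reduce_transportation_degrees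
    {V : Type*} [Fintype V] [DecidableEq V]
    (c : Sym2 V → ℝ) (hc0 : ∀ e, 0 ≤ c e)
    (htri : ∀ u v w : V, c s(u, w) ≤ c s(u, v) + c s(v, w))
    (r : V → ℤ) (hr : ∀ v, 1 ≤ r v) :
    (∀ z : Sym2 V → ℤ, (∀ e, 0 ≤ z e) → (∀ v, degSum z v = 2 * r v) →
      ∃ z' : Sym2 V → ℤ, (∀ e, 0 ≤ z' e) ∧ (∀ v, degSum z' v = 2 * (r v - 1)) ∧
        tourCost c z' ≤ tourCost c z) ∧
    (∀ TPr1 TPr : Sym2 V → ℤ,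
      (∀ e, 0 ≤ TPr1 e) → (∀ v, degSum TPr1 v = 2 * (r v - 1)) →
      (∀ z : Sym2 V → ℤ, (∀ e, 0 ≤ z e) → (∀ v, degSum z v = 2 * (r v - 1)) →
        tourCost c TPr1 ≤ tourCost c z) →
      (∀ e, 0 ≤ TPr e) → (∀ v, degSum TPr v = 2 * r v) →
      tourCost c TPr1 ≤ tourCost c TPr) := by
  have hreduce : ∀ z : Sym2 V → ℤ, (∀ e, 0 ≤ z e) → (∀ v, degSum z v = 2 * r v) →
      ∃ z' : Sym2 V → ℤ, (∀ e, 0 ≤ z' e) ∧ (∀ v, degSum z' v = 2 * (r v - 1)) ∧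
        tourCost c z' ≤ tourCost c z := by
    intro z hz hdeg
    have hcount (v : V) : (Finset.univ.val.count v : ℤ) = 1 := by simp
    obtain ⟨z', hz', hdeg', hcost⟩ :=
      exists_degSum_add_two_mul_count_eq htri Finset.univ.val hz fun v => by
        rw [hcount, hdeg]
        linarith [hr v]
    refine ⟨z', hz', fun v => ?_, hcost⟩
    have hv := hdeg' v
    rw [hcount, hdeg] at hv
    linarith
  refine ⟨hreduce, fun TPr1 TPr _ _ hmin hTPr hdeg => ?_⟩
  obtain ⟨z', hz', hdeg', hcost⟩ := hreduce TPr hTPr hdeg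
  exact (hmin z' hz' hdeg').trans hcost
end
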